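/- For a compact metric space X, the collection Perf(X) of non-empty perfect subsets of X is a G_δ subset of the hyperspace 2^X with the Hausdorff metric; moreover, if X itself is perfect, then Perf(X) is a dense G_δ subset of 2^X. -/

import Mathlib

open TopologicalSpace

/-!
A compact set `A` in a metric space is perfect iff, for every `n`, each point of `A` has another
point of `A` within distance `1 / (n + 1)`. By compactness of `A`, finitely many pairs of nearby
points witness this for all points of `A` at once, so the condition survives small perturbations of
`A`: it defines an open subset of the hyperspace, and the perfect sets are a countable intersection
of these.

For density, a basic Vietoris open set is given by finitely many nonempty open sets `U`. In a
perfect completely metrizable space each `U` contains a Cantor set, and the union of these Cantor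
sets is a perfect member of the given open set.
-/

open Filter Set Topology
open scoped Uniformity

section PerfectSets

variable {X Y ι : Type*} [TopologicalSpace X] [TopologicalSpace Y]

theorem perfectSpace_pi [Infinite ι] (Z : ι → Type*) [∀ i, TopologicalSpace (Z i)]
    [∀ i, Nontrivial (Z i)] : PerfectSpace (∀ i, Z i) := by
  classical
  refine ⟨preperfect_iff_nhds.2 fun x _ U hU => ?_⟩
  rw [nhds_pi, Filter.mem_pi] at hU
  obtain ⟨I, hI, t, ht, htU⟩ := hU
  obtain ⟨i, hi⟩ := hI.exists_notMem
  obtain ⟨z, hz⟩ := exists_ne (x i)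
  have hmem : Function.update x i z ∈ I.pi t := fun j hj => by
    rw [Function.update_of_ne (ne_of_mem_of_not_mem hj hi)]
    exact mem_of_mem_nhds (ht j)
  exact ⟨Function.update x i z, ⟨htU hmem, mem_univ _⟩, Function.update_ne_self_iff.2 hz⟩

theorem preperfect_image {C : Set X} (hC : Preperfect C) {f : X → Y}
    (hf : ∀ x ∈ C, ContinuousAt f x) (hinj : Function.Injective f) : Preperfect (f '' C) := by
  rintro _ ⟨x, hx, rfl⟩
  simpa only [map_principal] using (hC x hx).map (hf x hx) hinj

theorem preperfect_iUnion {C : ι → Set X} (hC : ∀ i, Preperfect (C i)) :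
    Preperfect (⋃ i, C i) := by
  intro x hx
  obtain ⟨i, hi⟩ := mem_iUnion.1 hx
  exact (hC i x hi).mono (principal_mono.2 (subset_iUnion C i))

theorem perfect_iUnion [Finite ι] {C : ι → Set X} (hC : ∀ i, Perfect (C i)) :
    Perfect (⋃ i, C i) :=
  ⟨isClosed_iUnion_of_finite fun i => (hC i).closed, preperfect_iUnion fun i => (hC i).acc⟩

theorem preperfect_iff_of_hasBasis_uniformity {α : Type*} [UniformSpace α] {p : ι → Prop}
    {s : ι → Set (α × α)} (hs : (𝓤 α).HasBasis p s) {C : Set α} :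
    Preperfect C ↔ ∀ i, p i → ∀ x ∈ C, ∃ y ∈ C, (x, y) ∈ s i ∧ y ≠ x := by
  have accPt_iff (x : α) : AccPt x (𝓟 C) ↔ ∀ i, p i → ∃ y ∈ C, (x, y) ∈ s i ∧ y ≠ x := by
    rw [accPt_iff_frequently, (nhds_basis_uniformity' hs).frequently_iff]
    refine forall₂_congr fun i _ => exists_congr fun y => ?_
    change (x, y) ∈ s i ∧ y ≠ x ∧ y ∈ C ↔ y ∈ C ∧ (x, y) ∈ s i ∧ y ≠ x
    tauto
  simp only [Preperfect, accPt_iff]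
  tauto

theorem exists_perfect_nonemptyCompacts_subset [IsCompletelyMetrizableSpace X] {C : Set X}
    (hC : Perfect C) (hne : C.Nonempty) :
    ∃ K : NonemptyCompacts X, Perfect (K : Set X) ∧ (K : Set X) ⊆ C := by
  let := upgradeIsCompletelyMetrizable X
  obtain ⟨f, hfC, hf, hinj⟩ := hC.exists_nat_bool_injection hne
  have hcompact : IsCompact (range f) := isCompact_range hf
  have hpreperfect : Preperfect (range f) := by
    rw [← image_univ]
    exact preperfect_image (perfectSpace_pi fun _ : ℕ => Bool).univ_preperfect
      (fun _ _ => hf.continuousAt) hinj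
  exact ⟨⟨⟨range f, hcompact⟩, range_nonempty f⟩, ⟨hcompact.isClosed, hpreperfect⟩, hfC⟩

theorem exists_perfect_nonemptyCompacts_subset_of_isOpen [IsCompletelyMetrizableSpace X]
    (hX : Preperfect (univ : Set X)) {U : Set X} (hU : IsOpen U) (hne : U.Nonempty) :
    ∃ K : NonemptyCompacts X, Perfect (K : Set X) ∧ (K : Set X) ⊆ U := by
  obtain ⟨x, hx⟩ := hne
  obtain ⟨V, hV, hxV, hVU⟩ :=
    isTopologicalBasis_opens.exists_closure_subset (hU.mem_nhds hx)
  have hperfect : Perfect (closure V) := by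
    simpa only [inter_univ] using (hX.open_inter hV).perfect_closure
  obtain ⟨K, hK, hKV⟩ := exists_perfect_nonemptyCompacts_subset hperfect ⟨x, subset_closure hxV⟩
  exact ⟨K, hK, hKV.trans hVU⟩

end PerfectSets

section Hyperspace

variable {X : Type*} [TopologicalSpace X]

theorem isOpen_setOfPred_forall_exists_mem {R : Set (X × X)} (hR : IsOpen R) :
    IsOpen {A : NonemptyCompacts X | ∀ x ∈ A, ∃ y ∈ A, (x, y) ∈ R} := by
  refine isOpen_iff_eventually.2 fun A hA => ?_
  have local_witness : ∀ x ∈ (A : Set X),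
      ∀ᶠ p : NonemptyCompacts X × X in 𝓝 A ×ˢ 𝓝 x, ∃ y ∈ p.1, (p.2, y) ∈ R := by
    intro x hx
    obtain ⟨y, hy, hxy⟩ := hA x hx
    obtain ⟨U, V, hU, hV, hxU, hyV, hUV⟩ := isOpen_prod_iff.1 hR x y hxy
    have hmeet : ∀ᶠ B : NonemptyCompacts X in 𝓝 A, ((B : Set X) ∩ V).Nonempty :=
      (NonemptyCompacts.isOpen_inter_nonempty_of_isOpen hV).mem_nhds ⟨y, hy, hyV⟩
    filter_upwards [hmeet.prod_mk (hU.mem_nhds hxU)] with ⟨B, z⟩ ⟨⟨w, hwB, hwV⟩, hzU⟩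
    exact ⟨w, hwB, hUV ⟨hzU, hwV⟩⟩
  obtain ⟨P, hP, Q, hQ, hPQ⟩ :=
    eventually_prod_iff.1 (A.isCompact.mem_prod_nhdsSet_of_forall local_witness)
  obtain ⟨W, hW, hAW, hWQ⟩ := eventually_nhdsSet_iff_exists.1 hQ
  filter_upwards [hP, (NonemptyCompacts.isOpen_subsets_of_isOpen hW).mem_nhds hAW]
    with B hBP hBW x hx
  exact hPQ hBP (hWQ x (hBW hx))

theorem isGδ_setOfPred_perfect [MetrizableSpace X] :
    IsGδ {A : NonemptyCompacts X | Perfect (A : Set X)} := by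
  let := metrizableSpaceMetric X
  let R (n : ℕ) : Set (X × X) := {p | dist p.1 p.2 < 1 / (n + 1) ∧ p.2 ≠ p.1}
  have hR (n : ℕ) : IsOpen (R n) :=
    (isOpen_lt continuous_dist continuous_const).inter
      (isOpen_ne_fun continuous_snd continuous_fst)
  have hperfect (A : NonemptyCompacts X) :
      Perfect (A : Set X) ↔ ∀ n, ∀ x ∈ A, ∃ y ∈ A, (x, y) ∈ R n := by
    rw [perfect_def, and_iff_right A.isCompact.isClosed,
      preperfect_iff_of_hasBasis_uniformity Metric.uniformity_basis_dist_inv_nat_succ]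
    simp only [true_imp_iff]
    rfl
  simp only [hperfect]
  rw [ofPred_forall]
  exact .iInter fun n => (isOpen_setOfPred_forall_exists_mem (hR n)).isGδ

theorem dense_setOfPred_perfect_of_forall_isOpen
    (h : ∀ U : Set X, IsOpen U → U.Nonempty →
      ∃ K : NonemptyCompacts X, Perfect (K : Set X) ∧ (K : Set X) ⊆ U) :
    Dense {A : NonemptyCompacts X | Perfect (A : Set X)} := by
  refine NonemptyCompacts.isTopologicalBasis.dense_iff.2 ?_
  rintro _ ⟨u, ⟨hfin, hne, hopen⟩, rfl⟩ ⟨A, -, hA⟩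
  have := hfin.to_subtype
  have := hne.to_subtype
  choose K hK hKU using fun U : u => h U (hopen U U.2) ((hA U U.2).mono inter_subset_right)
  let B : NonemptyCompacts X :=
    ⟨⟨⋃ U, K U, isCompact_iUnion fun U => (K U).isCompact⟩,
      nonempty_iUnion.2 ⟨Classical.arbitrary u, (K _).nonempty⟩⟩
  have hB_subset : (B : Set X) ⊆ ⋃₀ u :=
    iUnion_subset fun U => (hKU U).trans (subset_sUnion_of_mem U.2)
  have hB_meets : ∀ U ∈ u, ((B : Set X) ∩ U).Nonempty := fun U hU =>
    (K ⟨U, hU⟩).nonempty.mono (subset_inter (subset_iUnion (fun V => (K V : Set X)) _) (hKU _))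
  exact ⟨B, ⟨hB_subset, hB_meets⟩, perfect_iUnion hK⟩

end Hyperspace

theorem stmt13_general (X : Type*) [TopologicalSpace X] [MetrizableSpace X] :
    IsGδ {A : NonemptyCompacts X | Perfect (A : Set X)} ∧
    (IsCompletelyMetrizableSpace X → Perfect (univ : Set X) →
      Dense {A : NonemptyCompacts X | Perfect (A : Set X)}) :=
  ⟨isGδ_setOfPred_perfect, fun _ hX =>
    dense_setOfPred_perfect_of_forall_isOpen fun _ =>
      exists_perfect_nonemptyCompacts_subset_of_isOpen hX.acc⟩

/-- For a compact metric space `X`, the collection of non-empty perfect subsets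
is a Gδ subset of the hyperspace `2^X` (non-empty closed = compact subsets with
the Hausdorff metric); moreover, if `X` itself is perfect then this collection
is a dense Gδ subset of `2^X`. -/
theorem stmt13 (X : Type*) [MetricSpace X] [CompactSpace X] :
    IsGδ {A : NonemptyCompacts X | Perfect (A : Set X)} ∧
    (Perfect (Set.univ : Set X) →
      Dense {A : NonemptyCompacts X | Perfect (A : Set X)}) :=
  (stmt13_general X).imp_right fun h => h inferInstance
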